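/- Assume that for every M ∈ ℝ^N ∖ {0} the symbol ℓ satisfies the simple-characteristic property in direction M on W: for all z ∈ W, ζ ∈ ℝ^N and θ ≥ 0, the conditions ℓ(z, ζ + iθM) = 0 and ∑_{j=1}^N M_j ∂_{ζ_j} ℓ(z, ζ + iθM) = 0 imply ζ = 0 and θ = 0. Then there exist C > 0 and γ₀ ≥ 1 such that for all z ∈ V̄, ζ ∈ ℝ^N, τ ≥ 1, γ ≥ γ₀ and ε ∈ [0,1]: |F(z,ζ)|² + τ φ(z) |∇ψ_ε(z)|² {Re F, Im F}(z,ζ) ≥ C (|ζ|² + (τγφ(z))²)^{m}, where F(z,ζ) := ℓ(z, ζ + i τ̂(z)) and the Poisson bracket is taken in the variables (z,ζ) with the parameters τ, γ, ε fixed. -/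

import Mathlib

/-- The configuration space `ℝ^{N−1} × ℝ`, `z = (z', z_N)`. -/
abbrev Zsp (n : ℕ) := (Fin n → ℝ) × ℝ

/-- Complexification of a real (co)vector. -/
noncomputable def cplx {n : ℕ} (v : Zsp n) : (Fin n → ℂ) × ℂ :=
  (fun j => (v.1 j : ℂ), (v.2 : ℂ))

/-- `ψ_ε(z) = ψ(ε z', z_N)`. -/
noncomputable def psiEps {n : ℕ} (ψ : Zsp n → ℝ) (ε : ℝ) : Zsp n → ℝ :=
  fun z => ψ (fun j => ε * z.1 j, z.2)

/-- Gradient of a function on `ℝ^{N−1} × ℝ`. -/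
noncomputable def gradZ {n : ℕ} (f : Zsp n → ℝ) (z : Zsp n) : Zsp n :=
  (fun j => fderiv ℝ f z (Pi.single j 1, (0 : ℝ)),
   fderiv ℝ f z ((0 : Fin n → ℝ), (1 : ℝ)))

/-- Euclidean norm on `ℝ^{N−1} × ℝ`. -/
noncomputable def znorm {n : ℕ} (v : Zsp n) : ℝ :=
  Real.sqrt ((∑ j, (v.1 j) ^ 2) + v.2 ^ 2)

/-- Poisson bracket `{f,g} = ∑_j (∂_{ζ_j} f ∂_{z_j} g − ∂_{z_j} f ∂_{ζ_j} g)` on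
`(ℝ^{N−1} × ℝ) × (ℝ^{N−1} × ℝ)`, splitting the coordinates as `(z', z_N; ζ', ζ_N)`. -/
noncomputable def pbZ {n : ℕ} (f g : Zsp n × Zsp n → ℝ) (w : Zsp n × Zsp n) : ℝ :=
  (∑ j : Fin n,
    (fderiv ℝ f w (((0 : Fin n → ℝ), (0 : ℝ)), (Pi.single j 1, (0 : ℝ))) *
        fderiv ℝ g w ((Pi.single j 1, (0 : ℝ)), ((0 : Fin n → ℝ), (0 : ℝ))) -
      fderiv ℝ f w ((Pi.single j 1, (0 : ℝ)), ((0 : Fin n → ℝ), (0 : ℝ))) *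
        fderiv ℝ g w (((0 : Fin n → ℝ), (0 : ℝ)), (Pi.single j 1, (0 : ℝ))))) +
  (fderiv ℝ f w (((0 : Fin n → ℝ), (0 : ℝ)), ((0 : Fin n → ℝ), (1 : ℝ))) *
      fderiv ℝ g w (((0 : Fin n → ℝ), (1 : ℝ)), ((0 : Fin n → ℝ), (0 : ℝ))) -
    fderiv ℝ f w (((0 : Fin n → ℝ), (1 : ℝ)), ((0 : Fin n → ℝ), (0 : ℝ))) *
      fderiv ℝ g w (((0 : Fin n → ℝ), (0 : ℝ)), ((0 : Fin n → ℝ), (1 : ℝ))))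


section fst
open scoped ContDiff

abbrev ECn (n : ℕ) := (Fin n → ℂ) × ℂ

noncomputable def eb {n : ℕ} (i : Option (Fin n)) : Zsp n :=
  match i with
  | some j => (Pi.single j 1, 0)
  | none => (0, 1)

noncomputable def cplxL (n : ℕ) : Zsp n →L[ℝ] ECn n :=
  ContinuousLinearMap.prodMap
    (ContinuousLinearMap.pi fun j => Complex.ofRealCLM.comp (ContinuousLinearMap.proj j))
    Complex.ofRealCLM

lemma cplxL_apply {n : ℕ} (v : Zsp n) : cplxL n v = cplx v := rfl

lemma cplx_smul {n : ℕ} (c : ℝ) (v : Zsp n) : cplx (c • v) = (c : ℂ) • cplx v := by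
  ext <;> simp [cplx]

lemma cplx_zero {n : ℕ} : cplx (0 : Zsp n) = 0 := by
  ext <;> simp [cplx]

lemma continuous_cplx {n : ℕ} : Continuous (cplx : Zsp n → ECn n) := (cplxL n).continuous

/-- Expansion of the complexified gradient in the basis. -/
lemma cplx_gradZ {n : ℕ} (f : Zsp n → ℝ) (z : Zsp n) :
    cplx (gradZ f z) = ∑ i : Option (Fin n), ((fderiv ℝ f z (eb i) : ℝ) : ℂ) • cplx (eb i) := by
  rw [Fintype.sum_option]
  ext j
  · simp [cplx, gradZ, eb, Prod.fst_sum, Finset.sum_apply, Pi.single_apply, apply_ite Complex.ofReal]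
  · simp [cplx, gradZ, eb, Prod.snd_sum]

lemma pbZ_eq {n : ℕ} (F : Zsp n × Zsp n → ℂ) (F' : Zsp n × Zsp n →L[ℝ] ℂ) (w : Zsp n × Zsp n)
    (h : HasFDerivAt F F' w) :
    pbZ (fun w => (F w).re) (fun w => (F w).im) w =
      ∑ i : Option (Fin n), ((starRingEnd ℂ) (F' (0, eb i)) * F' (eb i, 0)).im := by
  have h1 : HasFDerivAt (fun w => (F w).re) (Complex.reCLM.comp F') w :=
    Complex.reCLM.hasFDerivAt.comp w h
  have h2 : HasFDerivAt (fun w => (F w).im) (Complex.imCLM.comp F') w :=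
    Complex.imCLM.hasFDerivAt.comp w h
  rw [pbZ, h1.fderiv, h2.fderiv, Fintype.sum_option, add_comm]
  congr 1
  · simp [eb, Complex.mul_im, ← Prod.zero_eq_mk]; ring
  · refine Finset.sum_congr rfl fun j _ => ?_
    simp [eb, Complex.mul_im, ← Prod.zero_eq_mk]; ring

section sym
variable {n m : ℕ} {A : Type*} (s : Finset A) (a : A → Zsp n → ℂ) (p : A → ECn n → ℂ)

noncomputable def S0 (z : Zsp n) (x : ECn n) : ℂ := ∑ α ∈ s, a α z * p α x

noncomputable def S1 (z : Zsp n) (x : ECn n) (u : Zsp n) : ℂ :=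
  ∑ α ∈ s, fderiv ℝ (a α) z u * p α x

noncomputable def S2 (z : Zsp n) (x : ECn n) (v : ECn n) : ℂ :=
  ∑ α ∈ s, a α z * fderiv ℂ (p α) x v

lemma S2_add (z x v v') : S2 s a p z x (v + v') = S2 s a p z x v + S2 s a p z x v' := by
  simp [S2, mul_add, Finset.sum_add_distrib]

lemma S2_smul (z x v) (c : ℂ) : S2 s a p z x (c • v) = c * S2 s a p z x v := by
  simp only [S2, map_smul, smul_eq_mul, Finset.mul_sum]
  exact Finset.sum_congr rfl fun _ _ => by ring

lemma S2_sum {ι : Type*} (t : Finset ι) (z x) (v : ι → ECn n) :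
    S2 s a p z x (∑ i ∈ t, v i) = ∑ i ∈ t, S2 s a p z x (v i) := by
  simp only [S2, map_sum, Finset.mul_sum]
  exact Finset.sum_comm


lemma S0_hom
    (hom : ∀ α ∈ s, ∀ (c : ℂ) x, p α (c • x) = c ^ m * p α x)
    (z x) (c : ℂ) : S0 s a p z (c • x) = c ^ m * S0 s a p z x := by
  simp only [S0, Finset.mul_sum]
  exact Finset.sum_congr rfl fun α hα => by rw [hom α hα]; ring

lemma S1_hom
    (hom : ∀ α ∈ s, ∀ (c : ℂ) x, p α (c • x) = c ^ m * p α x)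
    (z x u) (c : ℂ) : S1 s a p z (c • x) u = c ^ m * S1 s a p z x u := by
  simp only [S1, Finset.mul_sum]
  exact Finset.sum_congr rfl fun α hα => by rw [hom α hα]; ring

lemma S2_hom
    (hp : ∀ α, ContDiff ℂ ∞ (p α))
    (hom : ∀ α ∈ s, ∀ (c : ℂ) x, p α (c • x) = c ^ m * p α x)
    (z x v) (c : ℂ) : c * S2 s a p z (c • x) v = c ^ m * S2 s a p z x v := by
  simp only [S2, Finset.mul_sum]
  refine Finset.sum_congr rfl fun α hα => ?_
  have hd : Differentiable ℂ (p α) := (hp α).differentiable (by simp)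
  have h1 : HasFDerivAt (fun x => p α (c • x))
      ((fderiv ℂ (p α) (c • x)).comp (c • ContinuousLinearMap.id ℂ (ECn n))) x :=
    (hd (c • x)).hasFDerivAt.comp x ((hasFDerivAt_id x).const_smul c)
  have h2 : HasFDerivAt (fun x => p α (c • x)) (c ^ m • fderiv ℂ (p α) x) x := by
    have : (fun x => p α (c • x)) = fun x => c ^ m * p α x := funext fun x => hom α hα c x
    rw [this]
    exact (hd x).hasFDerivAt.const_mul (c ^ m)
  have h3 := congrArg (fun f => f v) (h1.unique h2)
  simp at h3
  linear_combination a α z * h3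

lemma S0_deriv
    (hp : ∀ α, ContDiff ℂ ∞ (p α))
    (z x M) :
    deriv (fun t : ℂ => S0 s a p z (x + t • M)) 0 = S2 s a p z x M := by
  apply HasDerivAt.deriv
  unfold S0 S2
  apply HasDerivAt.fun_sum
  intro α hα
  apply HasDerivAt.const_mul
  have hd : Differentiable ℂ (p α) := (hp α).differentiable (by simp)
  have h1 : HasDerivAt (fun t : ℂ => x + t • M) M 0 := by
    simpa using ((hasDerivAt_id (0:ℂ)).smul_const M).const_add x
  have h2 : HasFDerivAt (p α) (fderiv ℂ (p α) x) (x + (0:ℂ) • M) := by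
    simpa using (hd x).hasFDerivAt
  exact h2.comp_hasDerivAt 0 h1

variable {W : Set (Zsp n)}

lemma S0_fderiv
    (hp : ∀ α, ContDiff ℂ ∞ (p α))
    (hW : IsOpen W)
    (ha : ∀ α, ContDiffOn ℝ ∞ (a α) W)
    {z : Zsp n} (hz : z ∈ W) (ζ : Zsp n) (τh : Zsp n → Zsp n) (τ' : Zsp n →L[ℝ] Zsp n)
    (hτ : HasFDerivAt τh τ' z) : ∃ F' : Zsp n × Zsp n →L[ℝ] ℂ,
    HasFDerivAt (fun w : Zsp n × Zsp n => S0 s a p w.1 (cplx w.2 + Complex.I • cplx (τh w.1)))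
      F' (z, ζ) ∧ ∀ u v, F' (u, v) = S1 s a p z (cplx ζ + Complex.I • cplx (τh z)) u
        + S2 s a p z (cplx ζ + Complex.I • cplx (τh z)) (cplx v + Complex.I • cplx (τ' u)) := by
  set x := cplx ζ + Complex.I • cplx (τh z) with hx
  have hxx : HasFDerivAt (fun w : Zsp n × Zsp n => cplx w.2 + Complex.I • cplx (τh w.1))
      ((cplxL n).comp (ContinuousLinearMap.snd ℝ _ _) + Complex.I • ((cplxL n).comp
        (τ'.comp (ContinuousLinearMap.fst ℝ _ _)))) (z, ζ) := by
    apply HasFDerivAt.add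
    · exact ((cplxL n).comp (ContinuousLinearMap.snd ℝ (Zsp n) (Zsp n))).hasFDerivAt
    · exact HasFDerivAt.const_smul (f := fun w : Zsp n × Zsp n => cplx (τh w.1))
        ((cplxL n).hasFDerivAt.comp (z, ζ) (hτ.comp (z, ζ) hasFDerivAt_fst)) Complex.I
  have key : ∀ α ∈ s, HasFDerivAt (fun w : Zsp n × Zsp n =>
      a α w.1 * p α (cplx w.2 + Complex.I • cplx (τh w.1)))
      (a α z • (((fderiv ℂ (p α) x).restrictScalars ℝ).comp
        ((cplxL n).comp (ContinuousLinearMap.snd ℝ _ _) + Complex.I • ((cplxL n).comp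
        (τ'.comp (ContinuousLinearMap.fst ℝ _ _))))) + p α x •
        ((fderiv ℝ (a α) z).comp (ContinuousLinearMap.fst ℝ _ _))) (z, ζ) := by
    intro α _
    have hd : Differentiable ℂ (p α) := (hp α).differentiable (by simp)
    have h1 : HasFDerivAt (a α) (fderiv ℝ (a α) z) z :=
      (((ha α).contDiffAt (hW.mem_nhds hz)).differentiableAt (by simp)).hasFDerivAt
    have h2 : HasFDerivAt (p α) ((fderiv ℂ (p α) x).restrictScalars ℝ) x :=
      (hd x).hasFDerivAt.restrictScalars ℝ
    exact HasFDerivAt.mul (h1.comp (z, ζ) hasFDerivAt_fst) (HasFDerivAt.comp (z, ζ) h2 hxx)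
  refine ⟨_, HasFDerivAt.fun_sum key, ?_⟩
  intro u v
  simp only [S1, S2, ← Finset.sum_add_distrib, _root_.sum_apply]
  refine Finset.sum_congr rfl fun α _ => ?_
  simp [cplxL_apply]
  ring

/-- leading part -/
noncomputable def mainP (z ζ : Zsp n) (T : ℝ) (G : Zsp n) : ℝ :=
  ‖S0 s a p z (cplx ζ + Complex.I • cplx (T • G))‖ ^ 2 +
  znorm G ^ 2 * ‖(T : ℂ) * S2 s a p z (cplx ζ + Complex.I • cplx (T • G)) (cplx G)‖ ^ 2

/-- remainder -/
noncomputable def remP (z ζ : Zsp n) (T : ℝ) (G : Zsp n) (h : Option (Fin n) → Zsp n) : ℝ :=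
  znorm G ^ 2 * ∑ i : Option (Fin n),
   ((starRingEnd ℂ) (T * S2 s a p z (cplx ζ + Complex.I • cplx (T • G)) (cplx (eb i))) *
    (S1 s a p z (cplx ζ + Complex.I • cplx (T • G)) (eb i) +
      Complex.I * (T * S2 s a p z (cplx ζ + Complex.I • cplx (T • G)) (cplx (h i))))).im

lemma scale_arg (ζ G : Zsp n) (T c : ℝ) : cplx (c • ζ) + Complex.I • cplx ((c * T) • G) =
    (c : ℂ) • (cplx ζ + Complex.I • cplx (T • G)) := by
  simp only [cplx_smul, smul_add, smul_smul]
  push_cast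
  ring_nf

lemma S2_hom'
    (hp : ∀ α, ContDiff ℂ ∞ (p α))
    (hom : ∀ α ∈ s, ∀ (c : ℂ) x, p α (c • x) = c ^ m * p α x)
    (z x v) (c T : ℝ) : ((c * T : ℝ) : ℂ) * S2 s a p z ((c : ℂ) • x) v =
    (c : ℂ) ^ m * (T * S2 s a p z x v) := by
  have := S2_hom s a p hp hom z x v c
  push_cast
  linear_combination (T : ℂ) * this

lemma mainP_hom
    (hp : ∀ α, ContDiff ℂ ∞ (p α))
    (hom : ∀ α ∈ s, ∀ (c : ℂ) x, p α (c • x) = c ^ m * p α x)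
    (z ζ G : Zsp n) (T c : ℝ) :
    mainP s a p z (c • ζ) (c * T) G = (c ^ 2) ^ m * mainP s a p z ζ T G := by
  unfold mainP
  rw [scale_arg, S2_hom' s a p hp hom, S0_hom s a p hom]
  simp only [norm_mul _ (_ * _), norm_mul (_ ^ _), norm_pow, mul_pow, Complex.norm_real,
    Real.norm_eq_abs, ← pow_mul, mul_comm m 2]
  simp only [pow_mul, sq_abs]
  ring

lemma remP_hom
    (hp : ∀ α, ContDiff ℂ ∞ (p α))
    (hom : ∀ α ∈ s, ∀ (c : ℂ) x, p α (c • x) = c ^ m * p α x)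
    (z ζ G : Zsp n) (h) (T c : ℝ) :
    remP s a p z (c • ζ) (c * T) G h = (c ^ 2) ^ m * remP s a p z ζ T G h := by
  unfold remP
  simp only [scale_arg, S2_hom' s a p hp hom, S1_hom s a p hom]
  rw [mul_left_comm]
  congr 1
  rw [Finset.mul_sum]
  refine Finset.sum_congr rfl fun i _ => ?_
  rw [← Complex.im_ofReal_mul]
  congr 1
  simp only [map_mul, map_pow, Complex.conj_ofReal]
  push_cast
  ring

lemma S0_cont
    (hp : ∀ α, ContDiff ℂ ∞ (p α))
    (ha : ∀ α, ContDiffOn ℝ ∞ (a α) W)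
    : ContinuousOn (fun q : Zsp n × ECn n => S0 s a p q.1 q.2) (W ×ˢ Set.univ) := by
  unfold S0
  refine continuousOn_finsetSum _ fun α _ => ContinuousOn.mul ?_ ?_
  · exact (ha α).continuousOn.comp continuousOn_fst fun q hq => hq.1
  · exact ((hp α).continuous.comp continuous_snd).continuousOn

lemma S1_cont
    (hp : ∀ α, ContDiff ℂ ∞ (p α))
    (hW : IsOpen W)
    (ha : ∀ α, ContDiffOn ℝ ∞ (a α) W)
    (u : Zsp n) :
    ContinuousOn (fun q : Zsp n × ECn n => S1 s a p q.1 q.2 u) (W ×ˢ Set.univ) := by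
  unfold S1
  refine continuousOn_finsetSum _ fun α _ => ContinuousOn.mul ?_ ?_
  · have h1 : ContinuousOn (fderiv ℝ (a α)) W := (ha α).continuousOn_fderiv_of_isOpen hW (by simp)
    have h2 : ContinuousOn (fun z => fderiv ℝ (a α) z u) W := h1.clm_apply continuousOn_const
    exact h2.comp continuousOn_fst fun q hq => hq.1
  · exact ((hp α).continuous.comp continuous_snd).continuousOn

lemma S2_cont
    (hp : ∀ α, ContDiff ℂ ∞ (p α))
    (ha : ∀ α, ContDiffOn ℝ ∞ (a α) W)
    : ContinuousOn (fun q : Zsp n × ECn n × ECn n => S2 s a p q.1 q.2.1 q.2.2)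
    (W ×ˢ Set.univ) := by
  unfold S2
  refine continuousOn_finsetSum _ fun α _ => ContinuousOn.mul ?_ ?_
  · exact (ha α).continuousOn.comp continuousOn_fst fun q hq => hq.1
  · have h1 : Continuous (fderiv ℂ (p α)) := (hp α).continuous_fderiv (by simp)
    exact (Continuous.clm_apply (h1.comp (by fun_prop)) (by fun_prop)).continuousOn

lemma znorm_continuous : Continuous (znorm : Zsp n → ℝ) := by
  unfold znorm; fun_prop

lemma znorm_nonneg (v : Zsp n) : 0 ≤ znorm v := Real.sqrt_nonneg _

abbrev Qsp (n : ℕ) := Zsp n × Zsp n × ℝ × Zsp n × (Option (Fin n) → Zsp n)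

lemma mainP_cont
    (hp : ∀ α, ContDiff ℂ ∞ (p α))
    (ha : ∀ α, ContDiffOn ℝ ∞ (a α) W)
    : ContinuousOn (fun q : Qsp n => mainP s a p q.1 q.2.1 q.2.2.1 q.2.2.2.1)
    (W ×ˢ Set.univ) := by
  have c1 : Continuous (fun q : Qsp n => cplx q.2.1 + Complex.I • cplx (q.2.2.1 • q.2.2.2.1)) := by
    have := continuous_cplx (n := n)
    fun_prop
  have c2 : Continuous (fun q : Qsp n => cplx q.2.2.2.1) := by
    have := continuous_cplx (n := n)
    fun_prop
  have hz := znorm_continuous (n := n)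
  unfold mainP
  refine ContinuousOn.add ?_ (ContinuousOn.mul ?_ ?_)
  · refine ((S0_cont s a p hp ha).comp
      (f := fun q : Qsp n => (q.1, cplx q.2.1 + Complex.I • cplx (q.2.2.1 • q.2.2.2.1)))
      (continuous_fst.prodMk c1).continuousOn fun q hq => ⟨hq.1, trivial⟩).norm.pow 2
  · exact ((hz.comp (by fun_prop)).pow 2).continuousOn
  · refine (ContinuousOn.mul (by fun_prop) ?_).norm.pow 2
    exact (S2_cont s a p hp ha).comp
      (f := fun q : Qsp n => (q.1, cplx q.2.1 + Complex.I • cplx (q.2.2.1 • q.2.2.2.1),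
        cplx q.2.2.2.1))
      (continuous_fst.prodMk (c1.prodMk c2)).continuousOn fun q hq => ⟨hq.1, trivial⟩

lemma remP_cont
    (hp : ∀ α, ContDiff ℂ ∞ (p α))
    (hW : IsOpen W)
    (ha : ∀ α, ContDiffOn ℝ ∞ (a α) W)
    : ContinuousOn
    (fun q : Qsp n => remP s a p q.1 q.2.1 q.2.2.1 q.2.2.2.1 q.2.2.2.2) (W ×ˢ Set.univ) := by
  have hc := continuous_cplx (n := n)
  have c1 : Continuous (fun q : Qsp n => cplx q.2.1 + Complex.I • cplx (q.2.2.1 • q.2.2.2.1)) := by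
    fun_prop
  have hz := znorm_continuous (n := n)
  have cS2 : ∀ f : Qsp n → ECn n, Continuous f → ContinuousOn (fun q : Qsp n =>
      (q.2.2.1 : ℂ) * S2 s a p q.1 (cplx q.2.1 + Complex.I • cplx (q.2.2.1 • q.2.2.2.1)) (f q))
      (W ×ˢ Set.univ) := by
    intro f hf
    refine ContinuousOn.mul (by fun_prop) ?_
    exact (S2_cont s a p hp ha).comp
      (f := fun q : Qsp n => (q.1, cplx q.2.1 + Complex.I • cplx (q.2.2.1 • q.2.2.2.1), f q))
      (continuous_fst.prodMk (c1.prodMk hf)).continuousOn fun q hq => ⟨hq.1, trivial⟩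
  unfold remP
  refine ContinuousOn.mul ?_ (continuousOn_finsetSum _ fun i _ => ?_)
  · exact ((hz.comp (by fun_prop)).pow 2).continuousOn
  · refine Complex.continuous_im.comp_continuousOn (ContinuousOn.mul ?_ (ContinuousOn.add ?_ ?_))
    · exact Complex.continuous_conj.comp_continuousOn (cS2 _ continuous_const)
    · exact (S1_cont s a p hp hW ha (eb i)).comp
        (f := fun q : Qsp n => (q.1, cplx q.2.1 + Complex.I • cplx (q.2.2.1 • q.2.2.2.1)))
        (continuous_fst.prodMk c1).continuousOn fun q hq => ⟨hq.1, trivial⟩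
    · exact continuousOn_const.mul (cS2 (fun q => cplx (q.2.2.2.2 i)) (by fun_prop))

/-- squared Euclidean norm -/
noncomputable def nsq (ζ : Zsp n) (T : ℝ) : ℝ := (∑ j, (ζ.1 j) ^ 2) + ζ.2 ^ 2 + T ^ 2

lemma nsq_smul (ζ : Zsp n) (T c : ℝ) : nsq (c • ζ) (c * T) = c ^ 2 * nsq ζ T := by
  simp only [nsq, Prod.smul_fst, Prod.smul_snd, Pi.smul_apply, smul_eq_mul, mul_pow,
    ← Finset.mul_sum]
  ring

def Kset (K : Set (Zsp n)) (c₁ B : ℝ) : Set (Qsp n) :=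
  {q | q.1 ∈ K ∧ nsq q.2.1 q.2.2.1 = 1 ∧ 0 ≤ q.2.2.1 ∧ c₁ ≤ znorm q.2.2.2.1 ∧
    ‖q.2.2.2.1‖ ≤ B ∧ ‖q.2.2.2.2‖ ≤ B}

lemma Kset_compact {K : Set (Zsp n)} (hK : IsCompact K) (c₁ B : ℝ) :
    IsCompact (Kset K c₁ B) := by
  have hz := znorm_continuous (n := n)
  have hq : Continuous (fun q : Qsp n => nsq q.2.1 q.2.2.1) := by unfold nsq; fun_prop
  refine Metric.isCompact_of_isClosed_isBounded ?_ ?_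
  · refine (hK.isClosed.preimage continuous_fst).inter ?_
    refine (isClosed_eq hq continuous_const).inter ?_
    have i1 : IsClosed {q : Qsp n | 0 ≤ q.2.2.1} := isClosed_le continuous_const (by fun_prop)
    have i2 : IsClosed {q : Qsp n | c₁ ≤ znorm q.2.2.2.1} :=
      isClosed_le continuous_const (by fun_prop)
    have i3 : IsClosed {q : Qsp n | ‖q.2.2.2.1‖ ≤ B} := isClosed_le (by fun_prop) continuous_const
    have i4 : IsClosed {q : Qsp n | ‖q.2.2.2.2‖ ≤ B} := isClosed_le (by fun_prop) continuous_const
    exact i1.inter (i2.inter (i3.inter i4))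
  · obtain ⟨R, hR⟩ := hK.isBounded.exists_norm_le
    refine isBounded_iff_forall_norm_le.2 ⟨max R (max 1 B), fun q ⟨h1, h2, h3, h4, h5, h6⟩ => ?_⟩
    have hs : ∀ j, 0 ≤ (q.2.1.1 j) ^ 2 := fun j => sq_nonneg _
    have hS : 0 ≤ ∑ j, (q.2.1.1 j) ^ 2 := Finset.sum_nonneg fun j _ => hs j
    unfold nsq at h2
    have e1 : ‖q.2.1‖ ≤ 1 := by
      refine norm_prod_le_iff.2 ⟨(pi_norm_le_iff_of_nonneg zero_le_one).2 fun j => ?_, ?_⟩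
      · have := Finset.single_le_sum (fun j _ => hs j) (Finset.mem_univ j)
        rw [Real.norm_eq_abs, ← sq_le_one_iff_abs_le_one]
        nlinarith [sq_nonneg q.2.1.2, sq_nonneg q.2.2.1]
      · rw [Real.norm_eq_abs, ← sq_le_one_iff_abs_le_one]
        nlinarith [sq_nonneg q.2.2.1]
    have e2 : ‖q.2.2.1‖ ≤ 1 := by
      rw [Real.norm_eq_abs, ← sq_le_one_iff_abs_le_one]
      nlinarith [sq_nonneg q.2.1.2]
    have j1 : R ≤ max R (max 1 B) := le_max_left _ _
    have j2 : 1 ≤ max R (max 1 B) := (le_max_left _ _).trans (le_max_right _ _)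
    have j3 : B ≤ max R (max 1 B) := (le_max_right _ _).trans (le_max_right _ _)
    exact norm_prod_le_iff.2 ⟨(hR _ h1).trans j1, norm_prod_le_iff.2 ⟨e1.trans j2,
      norm_prod_le_iff.2 ⟨e2.trans j2, norm_prod_le_iff.2 ⟨h5.trans j3, h6.trans j3⟩⟩⟩⟩

lemma main_bound
    (hp : ∀ α, ContDiff ℂ ∞ (p α))
    (hom : ∀ α ∈ s, ∀ (c : ℂ) x, p α (c • x) = c ^ m * p α x)
    (hW : IsOpen W)
    (ha : ∀ α, ContDiffOn ℝ ∞ (a α) W)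
    {K : Set (Zsp n)} (hK : IsCompact K) (hKW : K ⊆ W) {c₁ : ℝ} (hc₁ : 0 < c₁) (B : ℝ)
    (hsimple : ∀ M : Zsp n, M ≠ 0 → ∀ z ∈ W, ∀ ζ : Zsp n, ∀ θ : ℝ, 0 ≤ θ →
      S0 s a p z (cplx ζ + ((θ : ℂ) * Complex.I) • cplx M) = 0 →
      deriv (fun t : ℂ =>
        S0 s a p z (cplx ζ + ((θ : ℂ) * Complex.I) • cplx M + t • cplx M)) 0 = 0 →
      ζ = 0 ∧ θ = 0) :
    ∃ C > 0, ∃ γ₀ : ℝ, 1 ≤ γ₀ ∧ ∀ γ, γ₀ ≤ γ → ∀ z ∈ K, ∀ (ζ : Zsp n) (T : ℝ) (G : Zsp n)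
      (h : Option (Fin n) → Zsp n), 0 < T → c₁ ≤ znorm G → ‖G‖ ≤ B → ‖h‖ ≤ B →
      C * nsq ζ T ^ m ≤ mainP s a p z ζ T G + γ⁻¹ * remP s a p z ζ T G h := by
  have hcomp := Kset_compact hK c₁ B
  have hsub : Kset K c₁ B ⊆ W ×ˢ Set.univ := fun q hq => ⟨hKW hq.1, trivial⟩
  have zn0 : znorm (0 : Zsp n) = 0 := by simp [znorm]
  have hpos : ∀ q ∈ Kset K c₁ B, 0 < mainP s a p q.1 q.2.1 q.2.2.1 q.2.2.2.1 := by
    rintro ⟨z, ζ, T, G, h⟩ ⟨h1, h2, h3, h4, h5, h6⟩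
    dsimp only at *
    have hG : G ≠ 0 := by
      rintro rfl
      rw [zn0] at h4
      linarith
    have hzn : 0 < znorm G := hc₁.trans_le h4
    by_contra hcon
    unfold mainP at hcon
    set x := cplx ζ + Complex.I • cplx (T • G) with hx
    have hx' : cplx ζ + ((T : ℂ) * Complex.I) • cplx G = x := by
      rw [hx, cplx_smul, smul_smul, mul_comm]
    have p1 : 0 ≤ ‖S0 s a p z x‖ ^ 2 := by positivity
    have p2 : 0 ≤ znorm G ^ 2 * ‖(T : ℂ) * S2 s a p z x (cplx G)‖ ^ 2 := by positivity
    have q1 : S0 s a p z x = 0 := by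
      have : ‖S0 s a p z x‖ ^ 2 = 0 := by linarith
      simpa using this
    have q2 : (T : ℂ) * S2 s a p z x (cplx G) = 0 := by
      have : znorm G ^ 2 * ‖(T : ℂ) * S2 s a p z x (cplx G)‖ ^ 2 = 0 := by linarith
      rcases mul_eq_zero.1 this with h | h
      · exact absurd h (by positivity)
      · exact norm_eq_zero.1 (pow_eq_zero_iff (two_ne_zero) |>.1 h)
    rcases mul_eq_zero.1 q2 with hT | hS
    · have hT : T = 0 := by exact_mod_cast hT
      subst hT
      have hζ : ζ ≠ 0 := by
        rintro rfl
        simp [nsq] at h2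
      have hxζ : x = cplx ζ := by simp [hx, cplx_zero]
      rw [hxζ] at q1
      refine hζ (hsimple ζ hζ z (hKW h1) ζ 0 le_rfl (by simpa using q1) ?_).1
      have : (fun t : ℂ => S0 s a p z (cplx ζ + (((0:ℝ) : ℂ) * Complex.I) • cplx ζ + t • cplx ζ))
          = fun t => 0 := by
        funext t
        have : cplx ζ + (((0:ℝ) : ℂ) * Complex.I) • cplx ζ + t • cplx ζ = (1 + t) • cplx ζ := by
          simp [add_smul]
        rw [this, S0_hom s a p hom, q1, mul_zero]
      rw [this]
      simp
    · have := hsimple G hG z (hKW h1) ζ T h3 (by rw [hx', q1])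
        (by rw [hx', S0_deriv s a p hp, hS])
      obtain ⟨rfl, rfl⟩ := this
      simp [nsq] at h2
  obtain ⟨b, hb, hbK⟩ := hcomp.exists_forall_le' ((mainP_cont s a p hp ha).mono hsub) hpos
  obtain ⟨D, hD⟩ := hcomp.exists_bound_of_continuousOn ((remP_cont s a p hp hW ha).mono hsub)
  refine ⟨b / 2, half_pos hb, max 1 (2 * D / b), le_max_left _ _, ?_⟩
  intro γ hγ z hz ζ T G h hT hG1 hG2 hh
  have hγ1 : 1 ≤ γ := (le_max_left _ _).trans hγ
  have hγ2 : 2 * D / b ≤ γ := (le_max_right _ _).trans hγ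
  have hγ0 : 0 < γ := by linarith
  have hn : 0 < nsq ζ T := by
    have : 0 ≤ ∑ j, (ζ.1 j) ^ 2 := Finset.sum_nonneg fun j _ => sq_nonneg _
    unfold nsq
    positivity
  set c := Real.sqrt (nsq ζ T) with hc
  have hc0 : 0 < c := Real.sqrt_pos.2 hn
  have hcc : c ^ 2 = nsq ζ T := Real.sq_sqrt hn.le
  have eζ : ζ = c • (c⁻¹ • ζ) := by rw [smul_smul, mul_inv_cancel₀ hc0.ne', one_smul]
  have eT : T = c * (c⁻¹ * T) := by rw [← mul_assoc, mul_inv_cancel₀ hc0.ne', one_mul]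
  have hn1 : nsq (c⁻¹ • ζ) (c⁻¹ * T) = 1 := by
    rw [nsq_smul, ← hcc, inv_pow, inv_mul_cancel₀ (by positivity)]
  have hmem : ((z, c⁻¹ • ζ, c⁻¹ * T, G, h) : Qsp n) ∈ Kset K c₁ B :=
    ⟨hz, hn1, by positivity, hG1, hG2, hh⟩
  have k1 := hbK _ hmem
  have k2 := hD _ hmem
  dsimp only at k1 k2
  rw [← hcc]
  have m1 := mainP_hom s a p hp hom z (c⁻¹ • ζ) G (c⁻¹ * T) c
  have m2 := remP_hom s a p hp hom z (c⁻¹ • ζ) G h (c⁻¹ * T) c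
  rw [← eζ, ← eT] at m1 m2
  rw [m1, m2]
  have k3 := (abs_le.1 k2).1
  have k4 : -(b / 2) ≤ γ⁻¹ * remP s a p z (c⁻¹ • ζ) (c⁻¹ * T) G h := by
    rw [inv_mul_eq_div, le_div_iff₀ hγ0]
    rw [div_le_iff₀ hb] at hγ2
    nlinarith
  have : 0 ≤ (c ^ 2) ^ m := by positivity
  nlinarith
end sym
end fst
section scp
open scoped ContDiff

section weight
variable {n : ℕ} (ψ : Zsp n → ℝ)

lemma psiEps_contDiff
    (hψ : ContDiff ℝ ∞ ψ)
    : ContDiff ℝ ∞ (fun q : ℝ × Zsp n => psiEps ψ q.1 q.2) := by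
  unfold psiEps
  refine hψ.comp (ContDiff.prodMk ?_ (by fun_prop))
  rw [contDiff_pi]
  intro j
  fun_prop

lemma grad_contDiff
    (hψ : ContDiff ℝ ∞ ψ)
    : ContDiff ℝ ∞ (fun q : ℝ × Zsp n => gradZ (psiEps ψ q.1) q.2) := by
  have h1 : ContDiff ℝ ∞ (fun q : ℝ × Zsp n => fderiv ℝ (psiEps ψ q.1) q.2) := by
    refine ContDiff.fderiv (f := fun (q : ℝ × Zsp n) z => psiEps ψ q.1 z) (m := ∞) (n := ∞) ?_
      contDiff_snd
      (by simp)
    exact (psiEps_contDiff ψ hψ).comp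
      (g := fun q : ℝ × Zsp n => psiEps ψ q.1 q.2)
      (f := fun q : (ℝ × Zsp n) × Zsp n => (q.1.1, q.2)) (by fun_prop)
  unfold gradZ
  refine ContDiff.prodMk ?_ ?_
  · rw [contDiff_pi]
    exact fun j => h1.clm_apply contDiff_const
  · exact h1.clm_apply contDiff_const

lemma hess_cont
    (hψ : ContDiff ℝ ∞ ψ)
    : Continuous (fun q : ℝ × Zsp n => fderiv ℝ (gradZ (psiEps ψ q.1)) q.2) := by
  have h1 : ContDiff ℝ ∞ (fun q : ℝ × Zsp n => fderiv ℝ (gradZ (psiEps ψ q.1)) q.2) := by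
    refine ContDiff.fderiv (f := fun (q : ℝ × Zsp n) z => gradZ (psiEps ψ q.1) z) (m := ∞) (n := ∞) ?_
      contDiff_snd (by simp)
    exact (grad_contDiff ψ hψ).comp
      (g := fun q : ℝ × Zsp n => gradZ (psiEps ψ q.1) q.2)
      (f := fun q : (ℝ × Zsp n) × Zsp n => (q.1.1, q.2)) (by fun_prop)
  exact h1.continuous

lemma weight_bound
    (hψ : ContDiff ℝ ∞ ψ)
    {K : Set (Zsp n)} (hK : IsCompact K) : ∃ B : ℝ, ∀ ε : ℝ, 0 ≤ ε → ε ≤ 1 →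
    ∀ z ∈ K, ‖gradZ (psiEps ψ ε) z‖ ≤ B ∧
      ‖fun i : Option (Fin n) => fderiv ℝ (gradZ (psiEps ψ ε)) z (eb i)‖ ≤ B := by
  have hc : IsCompact (Set.Icc (0:ℝ) 1 ×ˢ K) := isCompact_Icc.prod hK
  obtain ⟨B1, h1⟩ := hc.exists_bound_of_continuousOn (grad_contDiff ψ hψ).continuous.continuousOn
  have h2c : Continuous (fun q : ℝ × Zsp n => fun i : Option (Fin n) =>
      fderiv ℝ (gradZ (psiEps ψ q.1)) q.2 (eb i)) :=
    continuous_pi fun i => (hess_cont ψ hψ).clm_apply continuous_const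
  obtain ⟨B2, h2⟩ := hc.exists_bound_of_continuousOn h2c.continuousOn
  refine ⟨max B1 B2, fun ε e0 e1 z hz => ?_⟩
  have hm : (ε, z) ∈ Set.Icc (0:ℝ) 1 ×ˢ K := ⟨⟨e0, e1⟩, hz⟩
  exact ⟨(h1 _ hm).trans (le_max_left _ _), (h2 _ hm).trans (le_max_right _ _)⟩

lemma tau_fderiv
    (hψ : ContDiff ℝ ∞ ψ)
    (τ γ ε : ℝ) (z : Zsp n) :
    ∃ τ' : Zsp n →L[ℝ] Zsp n,
    HasFDerivAt (fun w => (τ * γ * Real.exp (γ * psiEps ψ ε w)) • gradZ (psiEps ψ ε) w) τ' z ∧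
    ∀ u, τ' u = (τ * γ * Real.exp (γ * psiEps ψ ε z)) •
      ((γ * fderiv ℝ (psiEps ψ ε) z u) • gradZ (psiEps ψ ε) z +
        fderiv ℝ (gradZ (psiEps ψ ε)) z u) := by
  have d1 : HasFDerivAt (psiEps ψ ε) (fderiv ℝ (psiEps ψ ε) z) z := by
    have : ContDiff ℝ ∞ (psiEps ψ ε) :=
      (psiEps_contDiff ψ hψ).comp (f := fun w : Zsp n => (ε, w)) (by fun_prop)
    exact (this.differentiable (by simp) z).hasFDerivAt
  have d2 : HasFDerivAt (gradZ (psiEps ψ ε)) (fderiv ℝ (gradZ (psiEps ψ ε)) z) z := by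
    have : ContDiff ℝ ∞ (gradZ (psiEps ψ ε)) :=
      (grad_contDiff ψ hψ).comp (f := fun w : Zsp n => (ε, w)) (by fun_prop)
    exact (this.differentiable (by simp) z).hasFDerivAt
  refine ⟨_, (((d1.const_mul γ).exp).const_mul (τ * γ)).smul d2, fun u => ?_⟩
  simp [smul_smul, smul_add]
  rw [add_comm]
  congr 2
  ring
end weight

lemma mono_contDiff {n m : ℕ} (α : (Fin n → Fin (m + 1)) × Fin (m + 1)) :
    ContDiff ℂ ∞ (fun ζ : ECn n => (∏ j, ζ.1 j ^ (α.1 j : ℕ)) * ζ.2 ^ (α.2 : ℕ)) := by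
  refine ContDiff.mul (contDiff_prod fun j _ => ?_) (by fun_prop)
  have : ContDiff ℂ ∞ (fun ζ : ECn n => ζ.1 j) := by fun_prop
  exact this.pow _

lemma mono_hom {n m : ℕ} (α : (Fin n → Fin (m + 1)) × Fin (m + 1))
    (hα : (∑ j, (α.1 j : ℕ)) + (α.2 : ℕ) = m) (c : ℂ) (ζ : ECn n) :
    (∏ j, (c • ζ).1 j ^ (α.1 j : ℕ)) * (c • ζ).2 ^ (α.2 : ℕ) =
      c ^ m * ((∏ j, ζ.1 j ^ (α.1 j : ℕ)) * ζ.2 ^ (α.2 : ℕ)) := by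
  simp only [Prod.smul_fst, Prod.smul_snd, Pi.smul_apply, smul_eq_mul, mul_pow,
    Finset.prod_mul_distrib, Finset.prod_pow_eq_pow_sum]
  have hcm : c ^ m = c ^ (∑ j, (α.1 j : ℕ)) * c ^ (α.2 : ℕ) := by rw [← pow_add, hα]
  rw [hcm]
  ring

/-- The algebraic identity for the bracket. -/
lemma bracket_alg {n : ℕ} (d : Option (Fin n) → ℂ) (D1 Hh : Option (Fin n) → ℂ) (g : Option (Fin n) → ℝ)
    (DG : ℂ) (hDG : DG = ∑ i, (g i : ℂ) * d i) (T γ Z : ℝ) (hγ : γ ≠ 0) :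
    T / γ * Z * ∑ i, ((starRingEnd ℂ) (d i) *
      (D1 i + Complex.I * (T * (γ * g i * DG + Hh i)))).im =
    Z * ‖(T : ℂ) * DG‖ ^ 2 + γ⁻¹ * (Z * ∑ i, ((starRingEnd ℂ) (T * d i) *
      (D1 i + Complex.I * (T * Hh i))).im) := by
  have e1 : ∀ i, ((starRingEnd ℂ) (d i) *
      (D1 i + Complex.I * (T * (γ * g i * DG + Hh i)))).im =
      T * γ * ((starRingEnd ℂ) (g i * d i) * DG).re +
      ((starRingEnd ℂ) (d i) * (D1 i + Complex.I * (T * Hh i))).im := by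
    intro i
    simp [Complex.mul_im, Complex.mul_re]
    ring
  have e2 : ∀ i, ((starRingEnd ℂ) (T * d i) * (D1 i + Complex.I * (T * Hh i))).im =
      T * ((starRingEnd ℂ) (d i) * (D1 i + Complex.I * (T * Hh i))).im := by
    intro i
    simp [Complex.mul_im, Complex.mul_re]
    ring
  have e3 : ∑ i, ((starRingEnd ℂ) (g i * d i) * DG).re = ‖DG‖ ^ 2 := by
    rw [← Complex.re_sum, ← Finset.sum_mul, ← map_sum, ← hDG, mul_comm, Complex.mul_conj,
      Complex.normSq_eq_norm_sq]
    exact Complex.ofReal_re _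
  simp only [e1, e2, Finset.sum_add_distrib, ← Finset.mul_sum, e3]
  rw [norm_mul, mul_pow, Complex.norm_real, Real.norm_eq_abs, sq_abs]
  field_simp

end scp
/-- Sub-ellipticity quantification: if the homogeneous symbol `ℓ` of degree `m` satisfies the
simple-characteristic property in every direction on `W ⊇ V̄`, then for `γ` large,
`|ℓ(z, ζ + iτ̂)|² + τφ|∇ψ_ε|² {Re ℓ_φ, Im ℓ_φ} ≥ C (|ζ|² + (τγφ)²)^m` on `V̄`, uniformly in
`τ ≥ 1`, `γ ≥ γ₀`, `ε ∈ [0,1]`, where `τ̂ = τγφ∇ψ_ε` and `φ = exp(γψ_ε)`. -/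
theorem stmt19 (n m : ℕ) (hm : 1 ≤ m)
    (V W : Set (Zsp n)) (hV : IsOpen V) (hVbd : Bornology.IsBounded V)
    (hW : IsOpen W) (hVW : closure V ⊆ W)
    (a : ((Fin n → Fin (m + 1)) × Fin (m + 1)) → Zsp n → ℂ)
    (ha : ∀ α, ContDiffOn ℝ (⊤ : ℕ∞) (a α) W)
    (L : Zsp n → ((Fin n → ℂ) × ℂ) → ℂ)
    (hL : ∀ z ζ, L z ζ =
      ∑ α ∈ Finset.univ.filter
          (fun α : (Fin n → Fin (m + 1)) × Fin (m + 1) =>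
            (∑ j, (α.1 j : ℕ)) + (α.2 : ℕ) = m),
        a α z * (∏ j, ζ.1 j ^ (α.1 j : ℕ)) * ζ.2 ^ (α.2 : ℕ))
    (hsimple : ∀ M : Zsp n, M ≠ 0 → ∀ z ∈ W, ∀ ζ : Zsp n, ∀ θ : ℝ, 0 ≤ θ →
      L z (cplx ζ + ((θ : ℂ) * Complex.I) • cplx M) = 0 →
      deriv (fun t : ℂ =>
        L z (cplx ζ + ((θ : ℂ) * Complex.I) • cplx M + t • cplx M)) 0 = 0 →
      ζ = 0 ∧ θ = 0)
    (ψ : Zsp n → ℝ) (hψ : ContDiff ℝ (⊤ : ℕ∞) ψ)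
    (c₀ : ℝ) (hc₀ : 0 < c₀) (hψpos : ∀ z, c₀ ≤ ψ z)
    (hbdd : ∀ k : ℕ, 1 ≤ k → ∃ Mb : ℝ, ∀ z, ‖iteratedFDeriv ℝ k ψ z‖ ≤ Mb)
    (c₁ : ℝ) (hc₁ : 0 < c₁)
    (hgrad : ∀ ε : ℝ, 0 ≤ ε → ε ≤ 1 →
      ∀ z ∈ closure V, c₁ ≤ znorm (gradZ (psiEps ψ ε) z)) :
    ∃ C > 0, ∃ γ₀ : ℝ, 1 ≤ γ₀ ∧
      ∀ τ γ ε : ℝ, 1 ≤ τ → γ₀ ≤ γ → 0 ≤ ε → ε ≤ 1 →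
      ∀ z ∈ closure V, ∀ ζ : Zsp n,
        C * (((∑ j, (ζ.1 j) ^ 2) + ζ.2 ^ 2 +
            (τ * γ * Real.exp (γ * psiEps ψ ε z)) ^ 2)) ^ m ≤
          ‖L z (cplx ζ + Complex.I • cplx
              ((τ * γ * Real.exp (γ * psiEps ψ ε z)) • gradZ (psiEps ψ ε) z))‖ ^ 2 +
          τ * Real.exp (γ * psiEps ψ ε z) * (znorm (gradZ (psiEps ψ ε) z)) ^ 2 *
            pbZ
              (fun w => (L w.1 (cplx w.2 + Complex.I • cplx
                ((τ * γ * Real.exp (γ * psiEps ψ ε w.1)) •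
                  gradZ (psiEps ψ ε) w.1))).re)
              (fun w => (L w.1 (cplx w.2 + Complex.I • cplx
                ((τ * γ * Real.exp (γ * psiEps ψ ε w.1)) •
                  gradZ (psiEps ψ ε) w.1))).im)
              (z, ζ) := by
  classical
  set s := Finset.univ.filter (fun α : (Fin n → Fin (m + 1)) × Fin (m + 1) =>
            (∑ j, (α.1 j : ℕ)) + (α.2 : ℕ) = m) with hs
  set p : ((Fin n → Fin (m + 1)) × Fin (m + 1)) → ECn n → ℂ :=
    fun α ζ => (∏ j, ζ.1 j ^ (α.1 j : ℕ)) * ζ.2 ^ (α.2 : ℕ) with hpdef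
  have hLS : L = S0 s a p := by
    funext z ζ
    rw [hL, S0]
    exact Finset.sum_congr rfl fun α _ => by rw [hpdef, mul_assoc]
  subst hLS
  have hp : ∀ α, ContDiff ℂ (⊤ : ℕ∞) (p α) := mono_contDiff
  have hom : ∀ α ∈ s, ∀ (c : ℂ) x, p α (c • x) = c ^ m * p α x := fun α hα c x =>
    mono_hom α (Finset.mem_filter.1 hα).2 c x
  have hK : IsCompact (closure V) := hVbd.isCompact_closure
  obtain ⟨B, hB⟩ := weight_bound ψ hψ hK
  obtain ⟨C, hC, γ₀, hγ₀, hmain⟩ :=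
    main_bound s a p hp hom hW ha hK hVW hc₁ B hsimple
  refine ⟨C, hC, γ₀, hγ₀, ?_⟩
  intro τ γ ε hτ hγ he0 he1 z hz ζ
  have hγ1 : 0 < γ := by linarith
  obtain ⟨hB1, hB2⟩ := hB ε he0 he1 z hz
  have hT : 0 < τ * γ * Real.exp (γ * psiEps ψ ε z) := by positivity
  have key := hmain γ hγ z hz ζ _ _ _ hT (hgrad ε he0 he1 z hz) hB1 hB2
  obtain ⟨τ', hτ', hτ'u⟩ := tau_fderiv ψ hψ τ γ ε z
  obtain ⟨F', hF', hF'u⟩ := S0_fderiv s a p hp hW ha (hVW hz) ζ _ τ' hτ'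
  rw [pbZ_eq _ F' _ hF']
  refine key.trans (le_of_eq ?_)
  unfold mainP remP
  rw [add_assoc]
  congr 1
  simp only [hF'u, hτ'u]
  set T := τ * γ * Real.exp (γ * psiEps ψ ε z) with hTdef
  set G := gradZ (psiEps ψ ε) z with hG
  set x := cplx ζ + Complex.I • cplx (T • G) with hx
  have hS10 : S1 s a p z x 0 = 0 := by simp [S1]
  have hb := bracket_alg (fun i => S2 s a p z x (cplx (eb i))) (fun i => S1 s a p z x (eb i))
    (fun i => S2 s a p z x (cplx (fderiv ℝ (gradZ (psiEps ψ ε)) z (eb i))))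
    (fun i => fderiv ℝ (psiEps ψ ε) z (eb i)) (S2 s a p z x (cplx G))
    (by rw [hG, cplx_gradZ, S2_sum]; simp only [S2_smul]) T γ (znorm G ^ 2) hγ1.ne'
  rw [← hb]
  have hTγ : T / γ = τ * Real.exp (γ * psiEps ψ ε z) := by
    rw [hTdef]; field_simp
  rw [hTγ]
  congr 1
  refine Finset.sum_congr rfl fun i _ => ?_
  have cadd : ∀ u v : Zsp n, cplx (u + v) = cplx u + cplx v := (cplxL n).map_add
  simp only [map_zero, cplx_zero, smul_zero, add_zero, zero_add, hS10, cplx_smul, S2_smul, cadd,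
    S2_add]
  push_cast
  simp only [mul_zero, zero_mul, add_zero]
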